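/- Let g(w) = (w f_z(w))′, which equals √(2π)(1 − Φ(z))((1 + w²) e^{w²/2} Φ(w) + w/√(2π)) for w ≤ z and √(2π) Φ(z)((1 + w²) e^{w²/2}(1 − Φ(w)) − w/√(2π)) for w > z. Then for every z > 2 and every real w: g(w) ≤ 4(1 + z²)(1 + z³)(1 + |w|³)^{−1} e^{z²/8} (1 − Φ(z)) if w ≤ z/2, and g(w) ≤ 8(1 + z²) e^{z²/2} (1 − Φ(z)) if w > z/2. -/

import Mathlib

open MeasureTheory ProbabilityTheory Real

/-- The standard normal cumulative distribution function. -/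
noncomputable def Phi (z : ℝ) : ℝ :=
  (Real.sqrt (2 * Real.pi))⁻¹ * ∫ u in Set.Iic z, Real.exp (-u ^ 2 / 2)

/-- The bounded solution `f_z` of the Stein equation
`f'(w) - w f(w) = 1{w ≤ z} - Φ(z)`. -/
noncomputable def fz (z w : ℝ) : ℝ :=
  if w ≤ z then Real.sqrt (2 * Real.pi) * Real.exp (w ^ 2 / 2) * Phi w * (1 - Phi z)
  else Real.sqrt (2 * Real.pi) * Real.exp (w ^ 2 / 2) * Phi z * (1 - Phi w)

/-- The derivative `f_z'`, expressed via the Stein equation. -/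
noncomputable def fz' (z w : ℝ) : ℝ :=
  w * fz z w + (if w ≤ z then 1 else 0) - Phi z

/-- The truncation `x̄ᵢ = ξᵢ 1{ξᵢ ≤ 1}`. -/
noncomputable def xbar {Ω : Type*} {n : ℕ} (ξ : Fin n → Ω → ℝ) (i : Fin n) (ω : Ω) : ℝ :=
  if ξ i ω ≤ 1 then ξ i ω else 0

/-- `W̄ = ∑ᵢ x̄ᵢ`. -/
noncomputable def Wbar {Ω : Type*} {n : ℕ} (ξ : Fin n → Ω → ℝ) (ω : Ω) : ℝ :=
  ∑ i, xbar ξ i ω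

/-- `W̄⁽ⁱ⁾ = W̄ - x̄ᵢ`. -/
noncomputable def Wbari {Ω : Type*} {n : ℕ} (ξ : Fin n → Ω → ℝ) (i : Fin n) (ω : Ω) : ℝ :=
  Wbar ξ ω - xbar ξ i ω

/-- `K̄ᵢ(t) = E[x̄ᵢ (1{0 ≤ t ≤ x̄ᵢ} - 1{x̄ᵢ ≤ t < 0})]`. -/
noncomputable def Kbar {Ω : Type*} [MeasureSpace Ω] {n : ℕ} (ξ : Fin n → Ω → ℝ)
    (i : Fin n) (t : ℝ) : ℝ :=
  ∫ ω, xbar ξ i ω * ((if 0 ≤ t ∧ t ≤ xbar ξ i ω then (1 : ℝ) else 0)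
    - (if xbar ξ i ω ≤ t ∧ t < 0 then (1 : ℝ) else 0))

/-- `β₂ = ∑ᵢ E[ξᵢ² 1{|ξᵢ| > 1}]`. -/
noncomputable def beta2 {Ω : Type*} [MeasureSpace Ω] {n : ℕ} (ξ : Fin n → Ω → ℝ) : ℝ :=
  ∑ i, ∫ ω, (if 1 < |ξ i ω| then (ξ i ω) ^ 2 else 0)

/-- `β₃ = ∑ᵢ E[|ξᵢ|³ 1{|ξᵢ| ≤ 1}]`. -/
noncomputable def beta3 {Ω : Type*} [MeasureSpace Ω] {n : ℕ} (ξ : Fin n → Ω → ℝ) : ℝ :=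
  ∑ i, ∫ ω, (if |ξ i ω| ≤ 1 then |ξ i ω| ^ 3 else 0)

/-- The explicit formula for g(w) = (w f_z(w))'. -/
noncomputable def gfun (z w : ℝ) : ℝ :=
  if w ≤ z then
    Real.sqrt (2 * Real.pi) * (1 - Phi z)
      * ((1 + w ^ 2) * Real.exp (w ^ 2 / 2) * Phi w + w / Real.sqrt (2 * Real.pi))
  else
    Real.sqrt (2 * Real.pi) * Phi z
      * ((1 + w ^ 2) * Real.exp (w ^ 2 / 2) * (1 - Phi w) - w / Real.sqrt (2 * Real.pi))

/-!
Let `K n x = ∫₀^∞ tⁿ exp (-x t - t² / 2) dt`. Completing the square gives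
`√(2π) exp (w² / 2) Φ w = K 0 (-w)`, and integration by parts gives `K 2 x = (1 + x²) K 0 x - x`.
Hence `g w` is `(1 - Φ z) K 2 (-w)` for `w ≤ z` and `Φ z K 2 w` for `w > z`. On the half-line
`x ≥ 0` the function `K 2` is decreasing, so that `K 2 x ≤ K 2 0 = √(2π) / 2`, and `x³ K 2 x ≤ 2`,
which gives the polynomial decay of `g` at `-∞`; for `x ≤ 0` the factor `exp (x² / 2)` dominates.
-/

/-- The integral `∫₀^∞ tⁿ exp (-x t - t² / 2) dt`. It is `(-1)ⁿ` times the `n`-th derivative of the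
Mills ratio `exp (x² / 2) ∫ₓ^∞ exp (-u² / 2) du` of the standard normal law, which is the case
`n = 0`. -/
noncomputable def millsMoment (n : ℕ) (x : ℝ) : ℝ :=
  ∫ t in Set.Ioi 0, t ^ n * exp (-x * t - t ^ 2 / 2)

lemma integrableOn_pow_mul_exp_neg_mul_sub_sq (n : ℕ) (x : ℝ) :
    IntegrableOn (fun t : ℝ ↦ t ^ n * exp (-x * t - t ^ 2 / 2)) (Set.Ioi 0) := by
  have hdom : IntegrableOn (fun t : ℝ ↦ exp (x ^ 2) * (t ^ (n : ℝ) * exp (-(1 / 4) * t ^ 2)))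
      (Set.Ioi 0) :=
    (integrableOn_rpow_mul_exp_neg_mul_sq (by norm_num)
      (by linarith [n.cast_nonneg (α := ℝ)])).const_mul _
  refine hdom.mono' (by fun_prop) ((ae_restrict_iff' measurableSet_Ioi).2 (.of_forall ?_))
  intro t ht
  have ht₀ : 0 ≤ t := le_of_lt ht
  have hexponent : -x * t - t ^ 2 / 2 ≤ x ^ 2 + -(1 / 4) * t ^ 2 := by
    linarith [sq_nonneg (x + t / 2)]
  calc ‖t ^ n * exp (-x * t - t ^ 2 / 2)‖
      = t ^ n * exp (-x * t - t ^ 2 / 2) := norm_of_nonneg (by positivity)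
    _ ≤ t ^ n * exp (x ^ 2 + -(1 / 4) * t ^ 2) := by gcongr
    _ = exp (x ^ 2) * (t ^ (n : ℝ) * exp (-(1 / 4) * t ^ 2)) := by
        rw [exp_add, rpow_natCast]; ring

lemma millsMoment_nonneg (n : ℕ) (x : ℝ) : 0 ≤ millsMoment n x :=
  setIntegral_nonneg measurableSet_Ioi fun _ ht ↦
    mul_nonneg (pow_nonneg (le_of_lt ht) n) (exp_pos _).le

lemma antitone_millsMoment (n : ℕ) : Antitone (millsMoment n) := by
  intro x y hxy
  refine setIntegral_mono_on (integrableOn_pow_mul_exp_neg_mul_sub_sq n y)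
    (integrableOn_pow_mul_exp_neg_mul_sub_sq n x) measurableSet_Ioi fun t ht ↦ ?_
  have ht₀ : 0 ≤ t := le_of_lt ht
  gcongr

lemma hasDerivAt_pow_mul_exp_neg_mul_sub_sq (n : ℕ) (x t : ℝ) :
    HasDerivAt (fun t : ℝ ↦ t ^ n * exp (-x * t - t ^ 2 / 2))
      (n * (t ^ (n - 1) * exp (-x * t - t ^ 2 / 2))
        - x * (t ^ n * exp (-x * t - t ^ 2 / 2))
        - t ^ (n + 1) * exp (-x * t - t ^ 2 / 2)) t := by
  have hexponent : HasDerivAt (fun t : ℝ ↦ -x * t - t ^ 2 / 2) (-x - t) t :=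
    (((hasDerivAt_id t).const_mul (-x)).sub ((hasDerivAt_pow 2 t).div_const 2)).congr_deriv
      (by norm_num)
  exact ((hasDerivAt_pow n t).mul hexponent.exp).congr_deriv (by ring)

/-- For `n = 0` the coefficient of the truncated index `n - 1` is `0`, and `0 ^ n = 1` is the
boundary term of the integration by parts. -/
lemma millsMoment_succ (n : ℕ) (x : ℝ) :
    millsMoment (n + 1) x = n * millsMoment (n - 1) x - x * millsMoment n x + 0 ^ n := by
  have hintegrable (k : ℕ) : Integrable _ (volume.restrict (Set.Ioi (0 : ℝ))) :=
    integrableOn_pow_mul_exp_neg_mul_sub_sq k x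
  have hderiv (t : ℝ) := hasDerivAt_pow_mul_exp_neg_mul_sub_sq n x t
  have hintegrable_sub := ((hintegrable (n - 1)).const_mul n).sub' ((hintegrable n).const_mul x)
  have hderiv_int := hintegrable_sub.sub' (hintegrable (n + 1))
  have hlim := tendsto_zero_of_hasDerivAt_of_integrableOn_Ioi
    (fun t _ ↦ hderiv t) hderiv_int (hintegrable n)
  have hparts := integral_Ioi_of_hasDerivAt_of_tendsto' (fun t _ ↦ hderiv t) hderiv_int hlim
  rw [integral_sub hintegrable_sub (hintegrable (n + 1)),
    integral_sub ((hintegrable (n - 1)).const_mul n) ((hintegrable n).const_mul x),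
    integral_const_mul, integral_const_mul] at hparts
  simp only [mul_zero, ne_eq, OfNat.ofNat_ne_zero, not_false_eq_true, zero_pow, zero_div, sub_zero,
    exp_zero, mul_one, zero_sub] at hparts
  simp only [millsMoment]
  linarith

lemma millsMoment_one (x : ℝ) : millsMoment 1 x = 1 - x * millsMoment 0 x := by
  simpa [sub_eq_neg_add] using millsMoment_succ 0 x

lemma millsMoment_two (x : ℝ) : millsMoment 2 x = (1 + x ^ 2) * millsMoment 0 x - x := by
  have hrec : millsMoment 2 x = millsMoment 0 x - x * millsMoment 1 x := by
    simpa using millsMoment_succ 1 x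
  rw [hrec, millsMoment_one]
  ring

lemma pow_succ_mul_millsMoment_le_factorial (n : ℕ) {x : ℝ} (hx : 0 ≤ x) :
    x ^ (n + 1) * millsMoment n x ≤ n.factorial := by
  induction n with
  | zero =>
    rw [zero_add, pow_one, Nat.factorial_zero, Nat.cast_one]
    linarith [millsMoment_one x, millsMoment_nonneg 1 x]
  | succ n ih =>
    have hstep : x * millsMoment (n + 1) x ≤ (n + 1) * millsMoment n x := by
      have hrec := millsMoment_succ (n + 1) x
      have hnonneg := millsMoment_nonneg (n + 2) x
      simp only [Nat.add_sub_cancel, Nat.cast_add, Nat.cast_one, zero_pow n.succ_ne_zero] at hrec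
      linarith
    calc x ^ (n + 1 + 1) * millsMoment (n + 1) x
        = x ^ (n + 1) * (x * millsMoment (n + 1) x) := by ring
      _ ≤ x ^ (n + 1) * ((n + 1) * millsMoment n x) := by gcongr
      _ = (n + 1) * (x ^ (n + 1) * millsMoment n x) := by ring
      _ ≤ (n + 1) * n.factorial := by gcongr
      _ = (n + 1).factorial := by rw [Nat.factorial_succ]; push_cast; ring

lemma sqrt_two_pi_le_three : √(2 * π) ≤ 3 :=
  (sqrt_le_left (by norm_num)).2 (by linarith [pi_lt_four])

lemma integrable_exp_neg_sq_div_two : Integrable fun u : ℝ ↦ exp (-u ^ 2 / 2) := by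
  simpa [neg_div, div_eq_inv_mul] using integrable_exp_neg_mul_sq (b := 2⁻¹) (by norm_num)

lemma integral_exp_neg_sq_div_two : ∫ u : ℝ, exp (-u ^ 2 / 2) = √(2 * π) := by
  simpa [neg_div, div_eq_inv_mul] using integral_gaussian 2⁻¹

lemma Phi_nonneg (w : ℝ) : 0 ≤ Phi w :=
  mul_nonneg (by positivity) (integral_nonneg fun u ↦ (exp_pos _).le)

lemma Phi_neg (w : ℝ) : Phi (-w) = 1 - Phi w := by
  have hreflect : ∫ u in Set.Iic (-w), exp (-u ^ 2 / 2) = ∫ u in Set.Ioi w, exp (-u ^ 2 / 2) := by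
    rw [← integral_comp_neg_Ioi]
    simp only [neg_sq]
  have hsplit := intervalIntegral.integral_Iic_add_Ioi
    (integrable_exp_neg_sq_div_two.integrableOn (s := Set.Iic w))
    (integrable_exp_neg_sq_div_two.integrableOn (s := Set.Ioi w))
  have hsqrt : √(2 * π) ≠ 0 := by positivity
  rw [integral_exp_neg_sq_div_two] at hsplit
  rw [Phi, Phi, hreflect, eq_sub_iff_add_eq', ← mul_add, hsplit, inv_mul_cancel₀ hsqrt]

lemma Phi_le_one (w : ℝ) : Phi w ≤ 1 := by
  linarith [Phi_nonneg (-w), Phi_neg w]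

lemma Phi_zero : Phi 0 = 1 / 2 := by
  have h := Phi_neg 0
  rw [neg_zero] at h
  linarith

lemma sqrt_two_pi_mul_exp_mul_Phi (w : ℝ) :
    √(2 * π) * exp (w ^ 2 / 2) * Phi w = millsMoment 0 (-w) := by
  have hreflect : ∫ t in Set.Ici 0, exp (-(w - t) ^ 2 / 2) =
      ∫ u in Set.Iic w, exp (-u ^ 2 / 2) := by
    simpa using (volume.measurePreserving_sub_left w).setIntegral_preimage_emb
      (MeasurableEquiv.subLeft w).measurableEmbedding (fun u ↦ exp (-u ^ 2 / 2)) (Set.Iic w)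
  calc √(2 * π) * exp (w ^ 2 / 2) * Phi w
      = exp (w ^ 2 / 2) * ∫ t in Set.Ioi 0, exp (-(w - t) ^ 2 / 2) := by
        rw [Phi, ← hreflect, integral_Ici_eq_integral_Ioi]
        field_simp
    _ = ∫ t in Set.Ioi 0, exp (w ^ 2 / 2) * exp (-(w - t) ^ 2 / 2) := (integral_const_mul _ _).symm
    _ = millsMoment 0 (-w) := by
        simp only [millsMoment, ← exp_add, pow_zero, one_mul]
        congr! 3
        ring

lemma sqrt_two_pi_mul_exp_mul_one_sub_Phi (w : ℝ) :
    √(2 * π) * exp (w ^ 2 / 2) * (1 - Phi w) = millsMoment 0 w := by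
  simpa only [Phi_neg, neg_sq, neg_neg] using sqrt_two_pi_mul_exp_mul_Phi (-w)

lemma millsMoment_zero_neg_le (w : ℝ) : millsMoment 0 (-w) ≤ 3 * exp (w ^ 2 / 2) := by
  rw [← sqrt_two_pi_mul_exp_mul_Phi]
  calc √(2 * π) * exp (w ^ 2 / 2) * Phi w
      ≤ 3 * exp (w ^ 2 / 2) * 1 := by
        gcongr
        exacts [Phi_nonneg w, sqrt_two_pi_le_three, Phi_le_one w]
    _ = 3 * exp (w ^ 2 / 2) := mul_one _

lemma millsMoment_two_neg_le (w : ℝ) :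
    millsMoment 2 (-w) ≤ 4 * (1 + w ^ 2) * exp (w ^ 2 / 2) := by
  have hexp : 1 ≤ exp (w ^ 2 / 2) := one_le_exp (by positivity)
  have hw : w ≤ 1 + w ^ 2 := by nlinarith [sq_nonneg (w - 1)]
  calc millsMoment 2 (-w)
      = (1 + w ^ 2) * millsMoment 0 (-w) + w := by rw [millsMoment_two]; ring
    _ ≤ (1 + w ^ 2) * (3 * exp (w ^ 2 / 2)) + (1 + w ^ 2) * exp (w ^ 2 / 2) := by
        gcongr
        exacts [millsMoment_zero_neg_le w, hw.trans (le_mul_of_one_le_right (by positivity) hexp)]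
    _ = 4 * (1 + w ^ 2) * exp (w ^ 2 / 2) := by ring

lemma millsMoment_two_zero : millsMoment 2 0 = √(2 * π) / 2 :=
  calc millsMoment 2 0
      = millsMoment 0 (-0) := by simp [millsMoment_two]
    _ = √(2 * π) * exp (0 ^ 2 / 2) * Phi 0 := (sqrt_two_pi_mul_exp_mul_Phi 0).symm
    _ = √(2 * π) / 2 := by simp [Phi_zero, div_eq_mul_inv]

lemma one_add_pow_three_mul_millsMoment_two_le {x : ℝ} (hx : 0 ≤ x) :
    (1 + x ^ 3) * millsMoment 2 x ≤ 4 := by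
  have hdecr : millsMoment 2 x ≤ √(2 * π) / 2 :=
    millsMoment_two_zero ▸ antitone_millsMoment 2 hx
  have hdecay : x ^ 3 * millsMoment 2 x ≤ 2 := by
    simpa using pow_succ_mul_millsMoment_le_factorial 2 hx
  linarith [sqrt_two_pi_le_three]

lemma gfun_of_le {z w : ℝ} (h : w ≤ z) : gfun z w = (1 - Phi z) * millsMoment 2 (-w) := by
  rw [gfun, if_pos h, millsMoment_two, ← sqrt_two_pi_mul_exp_mul_Phi]
  field_simp
  ring

lemma gfun_of_lt {z w : ℝ} (h : z < w) : gfun z w = Phi z * millsMoment 2 w := by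
  rw [gfun, if_neg h.not_ge, millsMoment_two, ← sqrt_two_pi_mul_exp_mul_one_sub_Phi]
  field_simp

lemma gfun_le_of_nonneg {z w : ℝ} (hz : 0 ≤ z) (hw : 0 ≤ w) :
    gfun z w ≤ 4 * (1 + z ^ 2) * exp (z ^ 2 / 2) * (1 - Phi z) := by
  have htail : 0 ≤ 1 - Phi z := sub_nonneg.2 (Phi_le_one z)
  rcases le_or_gt w z with hwz | hzw
  · calc gfun z w
        = (1 - Phi z) * millsMoment 2 (-w) := gfun_of_le hwz
      _ ≤ (1 - Phi z) * (4 * (1 + w ^ 2) * exp (w ^ 2 / 2)) := by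
          gcongr; exact millsMoment_two_neg_le w
      _ ≤ (1 - Phi z) * (4 * (1 + z ^ 2) * exp (z ^ 2 / 2)) := by gcongr
      _ = 4 * (1 + z ^ 2) * exp (z ^ 2 / 2) * (1 - Phi z) := mul_comm _ _
  · calc gfun z w
        = Phi z * millsMoment 2 w := gfun_of_lt hzw
      _ ≤ 1 * millsMoment 2 z :=
          mul_le_mul (Phi_le_one z) (antitone_millsMoment 2 hzw.le) (millsMoment_nonneg 2 w)
            zero_le_one
      _ ≤ (1 + z ^ 2) * millsMoment 0 z := by rw [millsMoment_two]; linarith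
      _ = √(2 * π) * ((1 + z ^ 2) * exp (z ^ 2 / 2) * (1 - Phi z)) := by
          rw [← sqrt_two_pi_mul_exp_mul_one_sub_Phi]; ring
      _ ≤ 4 * ((1 + z ^ 2) * exp (z ^ 2 / 2) * (1 - Phi z)) := by
          gcongr; linarith [sqrt_two_pi_le_three]
      _ = 4 * (1 + z ^ 2) * exp (z ^ 2 / 2) * (1 - Phi z) := by ring

lemma one_add_abs_pow_three_mul_millsMoment_two_neg_le {z w : ℝ} (hz : 0 ≤ z) (hw : w ≤ z / 2) :
    (1 + |w| ^ 3) * millsMoment 2 (-w) ≤ 4 * (1 + z ^ 2) * (1 + z ^ 3) * exp (z ^ 2 / 8) := by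
  rcases le_total 0 w with hw₀ | hw₀
  · have hwz : w ≤ z := by linarith
    have hexponent : w ^ 2 / 2 ≤ z ^ 2 / 8 := by nlinarith
    calc (1 + |w| ^ 3) * millsMoment 2 (-w)
        ≤ (1 + w ^ 3) * (4 * (1 + w ^ 2) * exp (w ^ 2 / 2)) := by
          rw [abs_of_nonneg hw₀]; gcongr; exact millsMoment_two_neg_le w
      _ ≤ (1 + z ^ 3) * (4 * (1 + z ^ 2) * exp (z ^ 2 / 8)) := by gcongr
      _ = 4 * (1 + z ^ 2) * (1 + z ^ 3) * exp (z ^ 2 / 8) := by ring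
  · calc (1 + |w| ^ 3) * millsMoment 2 (-w)
        ≤ 4 * 1 * 1 * 1 := by
          rw [abs_of_nonpos hw₀]
          linarith [one_add_pow_three_mul_millsMoment_two_le (neg_nonneg.2 hw₀)]
      _ ≤ 4 * (1 + z ^ 2) * (1 + z ^ 3) * exp (z ^ 2 / 8) := by
          gcongr
          exacts [le_add_of_nonneg_right (by positivity), le_add_of_nonneg_right (by positivity),
            one_le_exp (by positivity)]

lemma gfun_le_of_le_half {z w : ℝ} (hz : 0 ≤ z) (hw : w ≤ z / 2) :
    gfun z w ≤ 4 * (1 + z ^ 2) * (1 + z ^ 3) * (1 + |w| ^ 3)⁻¹ * exp (z ^ 2 / 8)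
      * (1 - Phi z) := by
  have htail : 0 ≤ 1 - Phi z := sub_nonneg.2 (Phi_le_one z)
  have hmoment : millsMoment 2 (-w) ≤
      4 * (1 + z ^ 2) * (1 + z ^ 3) * exp (z ^ 2 / 8) / (1 + |w| ^ 3) :=
    (le_div_iff₀' (by positivity)).2 (one_add_abs_pow_three_mul_millsMoment_two_neg_le hz hw)
  calc gfun z w
      = (1 - Phi z) * millsMoment 2 (-w) := gfun_of_le (by linarith)
    _ ≤ (1 - Phi z) * (4 * (1 + z ^ 2) * (1 + z ^ 3) * exp (z ^ 2 / 8) / (1 + |w| ^ 3)) := by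
        gcongr
    _ = _ := by ring

theorem gfun_bound_general (z : ℝ) (hz : 0 ≤ z) (w : ℝ) :
    (w ≤ z / 2 →
      gfun z w ≤ 4 * (1 + z ^ 2) * (1 + z ^ 3) * (1 + |w| ^ 3)⁻¹ * exp (z ^ 2 / 8)
        * (1 - Phi z))
    ∧ (z / 2 < w → gfun z w ≤ 8 * (1 + z ^ 2) * exp (z ^ 2 / 2) * (1 - Phi z)) := by
  refine ⟨gfun_le_of_le_half hz, fun hw ↦ (gfun_le_of_nonneg hz (by linarith)).trans ?_⟩
  have htail : 0 ≤ 1 - Phi z := sub_nonneg.2 (Phi_le_one z)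
  gcongr
  norm_num

/-- Pointwise bounds on g(w) = (w f_z(w))' for z > 2. -/
theorem gfun_bound (z : ℝ) (hz : 2 < z) (w : ℝ) :
    (w ≤ z / 2 →
      gfun z w ≤ 4 * (1 + z ^ 2) * (1 + z ^ 3) * ((1 + |w| ^ 3))⁻¹
        * Real.exp (z ^ 2 / 8) * (1 - Phi z))
    ∧ (z / 2 < w →
      gfun z w ≤ 8 * (1 + z ^ 2) * Real.exp (z ^ 2 / 2) * (1 - Phi z)) :=
  gfun_bound_general z (by linarith) w
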